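/- arXiv:1605.03310 — 2 statements merged into one kernel-verified Lean document; each statement's English description precedes it below -/
import Mathlib

section
/- Assume the bounded-variance condition, the concave-penalty condition, and the sparse-eigenvalue condition with constants c > 0 and κ. Let β₀ ∈ B_{τ,κ} with s = ‖β₀‖₀, let β̂ be a global minimizer of Q_n over B_{τ,κ}, and assume ‖n⁻¹Xᵀε‖_∞ ≤ λ/2. Set C₀ = (1 + 2c₃)/(c·c₂) and assume C₀²λ² < τ². Then the number of falsely discovered signs satisfies FS(β̂) ≤ (C₀²λ²/τ²)·s / (1 − C₀²λ²/τ²). -/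
open scoped BigOperators Classical

/-- The number of nonzero coordinates of a vector (the `L₀` "norm"). -/
noncomputable def l0 {p : ℕ} (v : Fin p → ℝ) : ℕ :=
  (Finset.univ.filter fun j => v j ≠ 0).card

/-- The thresholded parameter space `B_{τ,κ}`: vectors with fewer than `κ/2` nonzero
coordinates, each nonzero coordinate having magnitude at least `τ`. -/
def Bset {p : ℕ} (τ : ℝ) (κ : ℕ) : Set (Fin p → ℝ) :=
  {β | 2 * l0 β < κ ∧ ∀ j, β j = 0 ∨ τ ≤ |β j|}

/-- The penalized negative log-likelihood
`Q_n(β) = −n⁻¹(yᵀXβ − Σᵢ b((Xβ)ᵢ)) + Σⱼ p_λ(|β_j|)`. -/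
noncomputable def Qn {n p : ℕ} (X : Matrix (Fin n) (Fin p) ℝ) (y : Fin n → ℝ)
    (b : ℝ → ℝ) (pen : ℝ → ℝ) (β : Fin p → ℝ) : ℝ :=
  -(1 / (n : ℝ)) * (∑ i, y i * X.mulVec β i - ∑ i, b (X.mulVec β i)) + ∑ j, pen |β j|

theorem aux_taylor (b : ℝ → ℝ) (hb : ContDiff ℝ 2 b) (c₂ : ℝ)
    (hvar : ∀ θ : ℝ, c₂ ≤ deriv (deriv b) θ) (x z : ℝ) :
    c₂ / 2 * (z - x) ^ 2 ≤ b z - b x - deriv b x * (z - x) := by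
  have hd : Differentiable ℝ b := hb.differentiable (by norm_num)
  have hd' : Differentiable ℝ (deriv b) := by
    have : ContDiff ℝ (1 + 1) b := by convert hb using 1; norm_num
    exact ((contDiff_succ_iff_deriv.mp this).2.2).differentiable (by norm_num)
  have hg : ∀ t, HasDerivAt (fun t => b t - c₂ / 2 * t ^ 2) (deriv b t - c₂ * t) t := by
    intro t
    have h1 := (hd t).hasDerivAt.sub ((hasDerivAt_pow 2 t).const_mul (c₂ / 2))
    have h2 : deriv b t - c₂ * t = deriv b t - c₂ / 2 * (((2:ℕ):ℝ) * t ^ (2 - 1)) := by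
      norm_num; ring
    rw [h2]; exact h1
  have hg2 : ∀ t, HasDerivAt (fun t => deriv b t - c₂ * t) (deriv (deriv b) t - c₂) t := by
    intro t
    have h1 := (hd' t).hasDerivAt.sub ((hasDerivAt_id t).const_mul c₂)
    rw [mul_one] at h1
    exact h1
  have hm : Monotone (fun t => deriv b t - c₂ * t) := by
    apply monotone_of_deriv_nonneg (fun t => (hg2 t).differentiableAt)
    intro t
    rw [(hg2 t).deriv]; linarith [hvar t]
  have hde : deriv (fun t => b t - c₂ / 2 * t ^ 2) = fun t => deriv b t - c₂ * t :=
    funext fun t => (hg t).deriv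
  have hcv : ConvexOn ℝ Set.univ (fun t => b t - c₂ / 2 * t ^ 2) :=
    Monotone.convexOn_univ_of_deriv (fun t => (hg t).differentiableAt) (by rw [hde]; exact hm)
  have key : (deriv b x - c₂ * x) * (z - x) ≤
      (b z - c₂ / 2 * z ^ 2) - (b x - c₂ / 2 * x ^ 2) := by
    rcases lt_trichotomy x z with h | h | h
    · have := hcv.le_slope_of_hasDerivAt (Set.mem_univ x) (Set.mem_univ z) h (hg x)
      rw [slope_def_field, le_div_iff₀ (by linarith)] at this
      exact this
    · subst h; simp
    · have := hcv.slope_le_of_hasDerivAt (Set.mem_univ z) (Set.mem_univ x) h (hg x)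
      rw [slope_def_field, div_le_iff₀ (by linarith)] at this
      linarith
  nlinarith [key]

theorem aux_pen (pen : ℝ → ℝ) (d : ℝ) (hd : 0 ≤ d)
    (hmono : MonotoneOn pen (Set.Ici 0))
    (hconc : ConcaveOn ℝ (Set.Ici 0) pen)
    (hpen0 : pen 0 = 0)
    (hpend0 : HasDerivWithinAt pen d (Set.Ici 0) 0) (u v : ℝ) (hu : 0 ≤ u) (hv : 0 ≤ v) :
    pen u - pen v ≤ d * |u - v| := by
  rcases le_or_gt u v with h | h
  · have := hmono (Set.mem_Ici.2 hu) (Set.mem_Ici.2 hv) h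
    have := mul_nonneg hd (abs_nonneg (u - v))
    linarith
  · have hu' : 0 < u := lt_of_le_of_lt hv h
    have h1 : pen u ≤ d * u := by
      have := hconc.slope_le_of_hasDerivWithinAt (Set.mem_Ici.2 le_rfl) (Set.mem_Ici.2 hu) hu' hpend0
      rw [slope_def_field, div_le_iff₀ (by linarith)] at this
      linarith
    have h2 : v / u * pen u ≤ pen v := by
      have := hconc.2 (Set.mem_Ici.2 hu) (Set.mem_Ici.2 (le_refl (0:ℝ)))
        (div_nonneg hv hu) (sub_nonneg.2 ((div_le_one hu').2 h.le)) (add_sub_cancel _ _)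
      simpa [hpen0, div_mul_cancel₀ _ hu'.ne'] using this
    rw [abs_of_pos (by linarith)]
    have h3 : (1 - v / u) * pen u ≤ (1 - v / u) * (d * u) :=
      mul_le_mul_of_nonneg_left h1 (sub_nonneg.2 ((div_le_one hu').2 h.le))
    have h4 : (1 - v / u) * (d * u) = d * (u - v) := by field_simp
    linarith

theorem aux_sign (a b τ : ℝ) (hτ : 0 < τ) (ha : a = 0 ∨ τ ≤ |a|) (hb : b = 0 ∨ τ ≤ |b|)
    (h : Real.sign a ≠ Real.sign b) : τ ^ 2 ≤ (a - b) ^ 2 := by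
  rw [← sq_abs (a - b)]
  apply pow_le_pow_left₀ hτ.le
  rcases ha with rfl | ha <;> rcases hb with rfl | hb
  · exact absurd rfl h
  · simpa using hb
  · simpa using ha
  · rcases lt_trichotomy a 0 with h1 | h1 | h1
    · rcases lt_trichotomy b 0 with h2 | h2 | h2
      · exact absurd (by rw [Real.sign_of_neg h1, Real.sign_of_neg h2]) h
      · subst h2; simpa using ha
      · rw [abs_of_neg h1] at ha
        rw [abs_of_neg (by linarith)]; linarith
    · subst h1; simpa using hb
    · rcases lt_trichotomy b 0 with h2 | h2 | h2
      · rw [abs_of_pos h1] at ha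
        rw [abs_of_pos (by linarith)]; linarith
      · subst h2; simpa using ha
      · exact absurd (by rw [Real.sign_of_pos h1, Real.sign_of_pos h2]) h

/-- Deterministic form of Theorem 1(a): on the event `‖n⁻¹Xᵀε‖_∞ ≤ λ/2` and with
`C₀ = (1 + 2c₃)/(c·c₂)`, `C₀²λ² < τ²`, the number of falsely discovered signs of the
global minimizer satisfies `FS(β̂) ≤ (C₀²λ²/τ²)·s / (1 − C₀²λ²/τ²)`. -/
theorem false_signs_bound {n p : ℕ} (hn : 0 < n) (hp : 0 < p)
    (X : Matrix (Fin n) (Fin p) ℝ) (b : ℝ → ℝ) (hb : ContDiff ℝ 2 b)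
    (β₀ : Fin p → ℝ) (ε : Fin n → ℝ) (y : Fin n → ℝ)
    (hy : ∀ i, y i = deriv b (X.mulVec β₀ i) + ε i)
    -- bounded-variance condition
    (c₂ : ℝ) (hc₂ : 0 < c₂) (hc₂1 : c₂ ≤ 1)
    (hvar : ∀ θ : ℝ, c₂ ≤ deriv (deriv b) θ ∧ deriv (deriv b) θ ≤ c₂⁻¹)
    -- concave-penalty condition
    (pen : ℝ → ℝ) (lam c₃ : ℝ) (hc₃ : 0 < c₃) (hlam : 0 ≤ lam)
    (hmono : MonotoneOn pen (Set.Ici 0))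
    (hconc : ConcaveOn ℝ (Set.Ici 0) pen)
    (hpen0 : pen 0 = 0)
    (hpendiff : DifferentiableOn ℝ pen (Set.Ioi 0))
    (hpend0 : HasDerivWithinAt pen (c₃ * lam) (Set.Ici 0) 0)
    -- sparse-eigenvalue (robust spark) condition
    (c : ℝ) (hc : 0 < c) (κ : ℕ)
    (hse : ∀ v : Fin p → ℝ, l0 v < κ →
      c * ∑ j, (v j) ^ 2 ≤ (1 / (n : ℝ)) * ∑ i, (X.mulVec v i) ^ 2)
    -- thresholded parameter space and global minimizer
    (τ : ℝ) (hτ : 0 < τ) (hβ₀ : β₀ ∈ Bset τ κ)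
    (βh : Fin p → ℝ) (hβh : βh ∈ Bset τ κ)
    (hmin : ∀ β ∈ Bset τ κ, Qn X y b pen βh ≤ Qn X y b pen β)
    -- the event `‖n⁻¹Xᵀε‖_∞ ≤ λ/2`
    (hE : ∀ j, |(1 / (n : ℝ)) * ∑ i, X i j * ε i| ≤ lam / 2)
    -- the explicit constant
    (C₀ : ℝ) (hC₀ : C₀ = (1 + 2 * c₃) / (c * c₂))
    (hsmall : C₀ ^ 2 * lam ^ 2 < τ ^ 2) :
    ((Finset.univ.filter fun j => Real.sign (βh j) ≠ Real.sign (β₀ j)).card : ℝ) ≤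
      (C₀ ^ 2 * lam ^ 2 / τ ^ 2) * (l0 β₀ : ℝ) / (1 - C₀ ^ 2 * lam ^ 2 / τ ^ 2) := by
  have hn' : (0:ℝ) < n := by exact_mod_cast hn
  have hninv : (0:ℝ) < 1 / (n:ℝ) := by positivity
  set δ : Fin p → ℝ := βh - β₀ with hδ
  have hδj : ∀ j, δ j = βh j - β₀ j := fun j => rfl
  have hX : ∀ i, X.mulVec δ i = X.mulVec βh i - X.mulVec β₀ i := by
    intro i; rw [hδ, Matrix.mulVec_sub]; rfl
  have hl0 : l0 δ < κ := by
    have h1 : l0 δ ≤ l0 βh + l0 β₀ := by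
      unfold l0
      refine le_trans (Finset.card_le_card ?_) (Finset.card_union_le _ _)
      intro j
      simp only [Finset.mem_filter, Finset.mem_univ, true_and, Finset.mem_union]
      intro h
      by_contra! h'
      exact h (by rw [hδj, h'.1, h'.2, sub_zero])
    have := hβ₀.1
    have := hβh.1
    omega
  have hm := hmin β₀ hβ₀
  have hS := hse δ hl0
  have ht : c₂ / 2 * ∑ i, (X.mulVec δ i) ^ 2 ≤
      ∑ i, b (X.mulVec βh i) - ∑ i, b (X.mulVec β₀ i)
        - (∑ i, y i * X.mulVec βh i - ∑ i, y i * X.mulVec β₀ i) + ∑ i, ε i * X.mulVec δ i := by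
    rw [Finset.mul_sum, ← Finset.sum_sub_distrib, ← Finset.sum_sub_distrib,
      ← Finset.sum_sub_distrib, ← Finset.sum_add_distrib]
    apply Finset.sum_le_sum
    intro i _
    have := aux_taylor b hb c₂ (fun θ => (hvar θ).1) (X.mulVec β₀ i) (X.mulVec βh i)
    rw [hX, hy]
    linarith
  have hεX : (1 / (n:ℝ)) * ∑ i, ε i * X.mulVec δ i ≤ ∑ j, lam / 2 * |δ j| := by
    have : (1 / (n:ℝ)) * ∑ i, ε i * X.mulVec δ i
        = ∑ j, ((1 / (n : ℝ)) * ∑ i, X i j * ε i) * δ j := by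
      simp only [Matrix.mulVec, dotProduct, Finset.mul_sum, Finset.sum_mul]
      rw [Finset.sum_comm]
      refine Finset.sum_congr rfl fun j _ => Finset.sum_congr rfl fun i _ => by ring
    rw [this]
    apply Finset.sum_le_sum
    intro j _
    refine (le_abs_self _).trans ?_
    rw [abs_mul]
    exact mul_le_mul_of_nonneg_right (hE j) (abs_nonneg _)
  have hpen : ∑ j, pen |β₀ j| - ∑ j, pen |βh j| ≤ ∑ j, c₃ * lam * |δ j| := by
    rw [← Finset.sum_sub_distrib]
    apply Finset.sum_le_sum
    intro j _
    refine (aux_pen pen (c₃ * lam) (by positivity) hmono hconc hpen0 hpend0 _ _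
      (abs_nonneg _) (abs_nonneg _)).trans ?_
    apply mul_le_mul_of_nonneg_left _ (by positivity)
    rw [hδj, abs_sub_comm (βh j)]
    exact abs_abs_sub_abs_le_abs_sub _ _
  have hmain : ∑ j, (δ j) ^ 2 ≤ C₀ * lam * ∑ j, |δ j| := by
    rw [← Finset.mul_sum] at hεX hpen
    unfold Qn at hm
    have h1 := mul_le_mul_of_nonneg_left ht hninv.le
    have h2 := mul_le_mul_of_nonneg_left hS (by positivity : 0 ≤ c₂ / 2)
    have h3 : c₂ / 2 * (c * ∑ j, (δ j) ^ 2) ≤ (lam / 2 + c₃ * lam) * ∑ j, |δ j| := by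
      linarith
    rw [hC₀, div_mul_eq_mul_div, div_mul_eq_mul_div, le_div_iff₀ (by positivity)]
    linarith
  set F := Finset.univ.filter fun j => Real.sign (βh j) ≠ Real.sign (β₀ j) with hF
  have hcard : (l0 δ : ℝ) ≤ F.card + l0 β₀ := by
    have : l0 δ ≤ F.card + l0 β₀ := by
      unfold l0
      refine le_trans (Finset.card_le_card ?_) (Finset.card_union_le _ _)
      intro j
      simp only [hF, Finset.mem_filter, Finset.mem_univ, true_and, Finset.mem_union]
      intro h
      by_contra! h'
      obtain ⟨h1, h2⟩ := h'
      rw [h2, Real.sign_zero, Real.sign_eq_zero_iff] at h1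
      exact h (by rw [hδj, h1, h2, sub_zero])
    exact_mod_cast this
  have hsq : ∑ j, (δ j) ^ 2 ≤ C₀ ^ 2 * lam ^ 2 * l0 δ := by
    have h1 : C₀ * lam * ∑ j, |δ j| ≤
        ∑ j, ((δ j) ^ 2 / 2 + (if δ j ≠ 0 then C₀ ^ 2 * lam ^ 2 / 2 else 0)) := by
      rw [Finset.mul_sum]
      apply Finset.sum_le_sum
      intro j _
      split_ifs with h
      · nlinarith [sq_nonneg (C₀ * lam - |δ j|), sq_abs (δ j)]
      · push Not at h
        simp [h]
    rw [Finset.sum_add_distrib, ← Finset.sum_div, ← Finset.sum_filter, Finset.sum_const,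
      nsmul_eq_mul] at h1
    unfold l0
    linarith
  have hFS : (F.card : ℝ) * τ ^ 2 ≤ ∑ j, (δ j) ^ 2 := by
    rw [← nsmul_eq_mul, ← Finset.sum_const]
    refine le_trans (Finset.sum_le_sum (g := fun j => (δ j) ^ 2) ?_)
      (Finset.sum_le_sum_of_subset_of_nonneg (Finset.subset_univ F) fun j _ _ => sq_nonneg _)
    intro j hj
    exact aux_sign _ _ τ hτ (hβh.2 j) (hβ₀.2 j) (Finset.mem_filter.1 hj).2
  have hτ2 : 0 < τ ^ 2 := by positivity
  have hfin : (F.card : ℝ) * τ ^ 2 ≤ C₀ ^ 2 * lam ^ 2 * (F.card + l0 β₀) :=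
    hFS.trans (hsq.trans (mul_le_mul_of_nonneg_left hcard (by positivity)))
  have hr : C₀ ^ 2 * lam ^ 2 / τ ^ 2 < 1 := (div_lt_one hτ2).2 hsmall
  rw [le_div_iff₀ (by linarith)]
  have h5 : (F.card : ℝ) ≤ C₀ ^ 2 * lam ^ 2 / τ ^ 2 * (F.card + l0 β₀) := by
    rw [div_mul_eq_mul_div, le_div_iff₀ hτ2]; exact hfin
  linarith
end

section
/- Assume b : ℝ → ℝ is twice continuously differentiable with b''(θ) ≥ c₂ > 0 for all θ, assume the sparse-eigenvalue condition with constants c > 0 and κ, and assume the penalty p_λ : [0,∞) → ℝ is increasing, continuous, differentiable on (0,∞), has finite right derivative at 0, and has maximum concavity ρ(p_λ) := sup_{0 < t₁ < t₂ < ∞} {−(p_λ'(t₂) − p_λ'(t₁))/(t₂ − t₁)} < c·c₂. Then for every subset α ⊆ {1,…,p} with |α| < κ, the function Q_n(β) = −n⁻¹(yᵀXβ − Σ_{i=1}^n b((Xβ)ᵢ)) + Σ_{j=1}^p p_λ(|β_j|) is strictly convex on the coordinate subspace {β ∈ ℝ^p : β_j = 0 for all j ∉ α}. -/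
open scoped BigOperators Classical

lemma aux_b (b : ℝ → ℝ) (hb : ContDiff ℝ 2 b) (c₂ : ℝ)
    (hvar : ∀ θ : ℝ, c₂ ≤ deriv (deriv b) θ) (x z s t : ℝ) (hs : 0 ≤ s) (ht : 0 ≤ t)
    (hst : s + t = 1) :
    b (s * x + t * z) ≤ s * b x + t * b z - c₂ / 2 * (s * t) * (x - z) ^ 2 := by
  have hb1 : Differentiable ℝ b := hb.differentiable (by norm_num)
  have hb2 : Differentiable ℝ (deriv b) := by
    have h : ContDiff ℝ (1 + 1) b := by convert hb using 1; norm_num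
    exact (contDiff_succ_iff_deriv.1 h).2.2.differentiable (by norm_num)
  have hd : ∀ u, HasDerivAt (fun u => b u - c₂ / 2 * u ^ 2) (deriv b u - c₂ * u) u := by
    intro u
    have h := (hb1 u).hasDerivAt.sub (((hasDerivAt_id u).pow 2).const_mul (c₂ / 2))
    refine HasDerivAt.congr_deriv h ?_
    simp; ring
  have hd' : deriv (fun u => b u - c₂ / 2 * u ^ 2) = fun u => deriv b u - c₂ * u :=
    funext fun u => (hd u).deriv
  have hd2 : ∀ u, HasDerivAt (fun u => deriv b u - c₂ * u) (deriv (deriv b) u - c₂) u := by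
    intro u
    have h := (hb2 u).hasDerivAt.sub ((hasDerivAt_id u).const_mul c₂)
    refine HasDerivAt.congr_deriv h ?_
    simp
  have hconv : ConvexOn ℝ Set.univ (fun u => b u - c₂ / 2 * u ^ 2) := by
    apply Monotone.convexOn_univ_of_deriv (fun u => (hd u).differentiableAt)
    rw [hd']
    apply monotone_of_deriv_nonneg (fun u => (hd2 u).differentiableAt)
    intro u
    rw [(hd2 u).deriv]
    linarith [hvar u]
  have h := hconv.2 (Set.mem_univ x) (Set.mem_univ z) hs ht hst
  simp only [smul_eq_mul] at h
  obtain rfl : t = 1 - s := by linarith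
  nlinarith [h]

lemma aux_pen_s18 (pen : ℝ → ℝ)
    (hmono : MonotoneOn pen (Set.Ici 0))
    (hcont : ContinuousOn pen (Set.Ici 0))
    (hdiff : DifferentiableOn ℝ pen (Set.Ioi 0))
    (ρ : ℝ) (hρ0 : 0 ≤ ρ)
    (hρ : ∀ t₁ t₂ : ℝ, 0 < t₁ → t₁ < t₂ →
      -((deriv pen t₂ - deriv pen t₁) / (t₂ - t₁)) ≤ ρ) (x z s t : ℝ) (hs : 0 ≤ s) (ht : 0 ≤ t)
    (hst : s + t = 1) :
    pen |s * x + t * z| ≤ s * pen |x| + t * pen |z| + ρ / 2 * (s * t) * (x - z) ^ 2 := by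
  have hd : ∀ u, 0 < u →
      HasDerivAt (fun u => pen u + ρ / 2 * u ^ 2) (deriv pen u + ρ * u) u := by
    intro u hu
    have h := (hdiff.differentiableAt (Ioi_mem_nhds hu)).hasDerivAt.add
      (((hasDerivAt_id u).pow 2).const_mul (ρ / 2))
    refine HasDerivAt.congr_deriv h ?_
    simp; ring
  have hconv : ConvexOn ℝ (Set.Ici 0) (fun u => pen u + ρ / 2 * u ^ 2) := by
    apply MonotoneOn.convexOn_of_deriv (convex_Ici 0)
    · exact hcont.add (by fun_prop)
    · rw [interior_Ici]
      exact fun u hu => (hd u hu).differentiableAt.differentiableWithinAt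
    · rw [interior_Ici]
      intro u hu v hv huv
      rw [(hd u hu).deriv, (hd v hv).deriv]
      rcases huv.eq_or_lt with rfl | hlt
      · exact le_rfl
      · have h := hρ u v hu hlt
        have hpos : 0 < v - u := by linarith
        rw [← neg_div, div_le_iff₀ hpos] at h
        linarith
  have h := hconv.2 (Set.mem_Ici.2 (abs_nonneg x)) (Set.mem_Ici.2 (abs_nonneg z)) hs ht hst
  simp only [smul_eq_mul, sq_abs] at h
  have hle : |s * x + t * z| ≤ s * |x| + t * |z| := by
    refine (abs_add_le _ _).trans ?_
    rw [abs_mul, abs_mul, abs_of_nonneg hs, abs_of_nonneg ht]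
  have hm := hmono (Set.mem_Ici.2 (abs_nonneg _))
    (Set.mem_Ici.2 ((abs_nonneg _).trans hle)) hle
  have hsq : (s * x + t * z) ^ 2 ≤ (s * |x| + t * |z|) ^ 2 := by
    rw [← sq_abs (s * x + t * z)]
    exact pow_le_pow_left₀ (abs_nonneg _) hle 2
  have hsq' := mul_le_mul_of_nonneg_left hsq (by linarith : 0 ≤ ρ / 2)
  obtain rfl : t = 1 - s := by linarith
  nlinarith [h, hm, hsq']

/-- Claim of Section 5.1 (condition (e076)): if the maximum concavity of the penalty,
`ρ(p_λ) = sup_{0<t₁<t₂} {−(p_λ'(t₂) − p_λ'(t₁))/(t₂ − t₁)}`, is less than `c·c₂`, then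
the penalized objective `Q_n` is strictly convex on every sparse coordinate subspace
`{β : β_j = 0 for j ∉ α}` with `|α| < κ`. -/
theorem strict_convexity_on_sparse_subspaces {n p : ℕ} (hn : 0 < n) (hp : 0 < p)
    (X : Matrix (Fin n) (Fin p) ℝ) (y : Fin n → ℝ)
    (b : ℝ → ℝ) (hb : ContDiff ℝ 2 b)
    (c₂ : ℝ) (hc₂ : 0 < c₂) (hvar : ∀ θ : ℝ, c₂ ≤ deriv (deriv b) θ)
    (c : ℝ) (hc : 0 < c) (κ : ℕ)
    (hse : ∀ v : Fin p → ℝ, l0 v < κ →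
      c * ∑ j, (v j) ^ 2 ≤ (1 / (n : ℝ)) * ∑ i, (X.mulVec v i) ^ 2)
    (pen : ℝ → ℝ)
    (hmono : MonotoneOn pen (Set.Ici 0))
    (hcont : ContinuousOn pen (Set.Ici 0))
    (hdiff : DifferentiableOn ℝ pen (Set.Ioi 0))
    (L : ℝ) (hL : HasDerivWithinAt pen L (Set.Ici 0) 0)
    -- maximum concavity `ρ(p_λ) < c·c₂`
    (ρ₀ : ℝ) (hρlt : ρ₀ < c * c₂)
    (hρ : ∀ t₁ t₂ : ℝ, 0 < t₁ → t₁ < t₂ →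
      -((deriv pen t₂ - deriv pen t₁) / (t₂ - t₁)) ≤ ρ₀) :
    ∀ α : Finset (Fin p), α.card < κ →
      StrictConvexOn ℝ {β : Fin p → ℝ | ∀ j ∉ α, β j = 0} (Qn X y b pen) := by
  intro α hα
  refine ⟨?_, ?_⟩
  · intro u hu v hv s t _ _ _ j hj
    simp [hu j hj, hv j hj]
  intro u hu v hv huv s t hs ht hst
  have hnR : (0 : ℝ) < n := by exact_mod_cast hn
  set ρ := max ρ₀ 0 with hρdef
  have hρ0 : 0 ≤ ρ := le_max_right _ _
  have hρc : ρ < c * c₂ := max_lt hρlt (by positivity)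
  have hP : ∑ j, pen |(s • u + t • v) j| ≤ s * ∑ j, pen |u j| + t * ∑ j, pen |v j|
      + ρ / 2 * (s * t) * ∑ j, ((u - v) j) ^ 2 := by
    simp only [Finset.mul_sum, ← Finset.sum_add_distrib]
    exact Finset.sum_le_sum fun j _ => aux_pen_s18 pen hmono hcont hdiff ρ hρ0
      (fun t₁ t₂ h1 h2 => (hρ t₁ t₂ h1 h2).trans (le_max_left _ _)) _ _ s t hs.le ht.le hst
  have hX : ∀ i, X.mulVec (s • u + t • v) i = s * X.mulVec u i + t * X.mulVec v i := by
    intro i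
    simp [Matrix.mulVec_add, Matrix.mulVec_smul]
  have hB : ∑ i, b (X.mulVec (s • u + t • v) i) ≤ s * ∑ i, b (X.mulVec u i)
      + t * ∑ i, b (X.mulVec v i)
      - c₂ / 2 * (s * t) * ∑ i, (X.mulVec (u - v) i) ^ 2 := by
    simp only [Finset.mul_sum, ← Finset.sum_add_distrib, ← Finset.sum_sub_distrib]
    refine Finset.sum_le_sum fun i _ => ?_
    rw [hX, Matrix.mulVec_sub]
    exact aux_b b hb c₂ hvar _ _ s t hs.le ht.le hst
  have hY : ∑ i, y i * X.mulVec (s • u + t • v) i = s * ∑ i, y i * X.mulVec u i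
      + t * ∑ i, y i * X.mulVec v i := by
    simp only [Finset.mul_sum, ← Finset.sum_add_distrib]
    refine Finset.sum_congr rfl fun i _ => ?_
    rw [hX]; ring
  have hl0 : l0 (u - v) < κ := by
    refine lt_of_le_of_lt (Finset.card_le_card ?_) hα
    intro j hj
    by_contra hjα
    simp [hu j hjα, hv j hjα] at hj
  have hS := hse _ hl0
  have hpos : 0 < ∑ j, ((u - v) j) ^ 2 := by
    obtain ⟨j, hj⟩ := Function.ne_iff.1 huv
    refine Finset.sum_pos' (fun j _ => sq_nonneg _) ⟨j, Finset.mem_univ j, ?_⟩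
    have : (u - v) j ≠ 0 := sub_ne_zero.2 hj
    positivity
  have hN : 0 < 1 / (n : ℝ) := by positivity
  simp only [Qn, smul_eq_mul]
  rw [hY]
  generalize 1 / (n : ℝ) = N at *
  have h1 := mul_le_mul_of_nonneg_left hB hN.le
  have hst0 : 0 < s * t := mul_pos hs ht
  have h2 := mul_le_mul_of_nonneg_left hS (by positivity : 0 ≤ c₂ / 2 * (s * t))
  have h3 := mul_pos (mul_pos hst0 (sub_pos.2 hρc)) hpos
  linarith [h1, h2, h3, hP]
end
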